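/- arXiv:1506.06284 — 3 statements merged into one kernel-verified Lean document; each statement's English description precedes it below -/
import Mathlib

section
/- If a subproblem of the subset sum problem satisfies the C1-condition, i.e. ∑_{i∈I} (1−θ(i))·w_i ≥ W − C, then the 1-complement of its map (I, θ) is an optimal solution of this subproblem: it is feasible and its objective value is at least that of every feasible solution of the subproblem. -/
namespace SubsetSum

variable {ι M : Type*}

section AddCommMonoid

variable [AddCommMonoid M]

/-- The objective `f(x) = ∑ xᵢ wᵢ` of the subset sum problem: the total weight of the items selected
by `x`, with `true` and `false` encoding `1` and `0`. -/
def selectedWeight [Fintype ι] (w : ι → M) (x : ι → Bool) : M :=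
  ∑ i, if x i then w i else 0

/-- The weight `∑_{i ∈ I} (1 - θ(i)) wᵢ` of the items that the map `(I, θ)` rules out. As everywhere
below, `θ` is a total function of which only the values on `I` matter. -/
def excludedWeight (w : ι → M) (I : Finset ι) (θ : ι → Bool) : M :=
  ∑ i ∈ I, if θ i then 0 else w i

/-- Feasibility of the selection `x` in the subproblem of the map `(I, θ)` with capacity `C`. -/
def IsFeasible [Fintype ι] [LE M] (w : ι → M) (C : M) (I : Finset ι) (θ x : ι → Bool) : Prop :=
  selectedWeight w x ≤ C ∧ ∀ i ∈ I, x i = θ i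

/-- Optimality of the selection `x` in the subproblem of the map `(I, θ)` with capacity `C`. -/
def IsOptimal [Fintype ι] [LE M] (w : ι → M) (C : M) (I : Finset ι) (θ x : ι → Bool) : Prop :=
  IsFeasible w C I θ x ∧
    ∀ y, IsFeasible w C I θ y → selectedWeight w y ≤ selectedWeight w x

/-- The C1-condition `W - C ≤ ∑_{i ∈ I} (1 - θ(i)) wᵢ` on the map `(I, θ)`, where `W = ∑ wᵢ`. The
capacity is moved to the right so that weights need not admit subtraction. -/
def SatisfiesC1 [Fintype ι] [LE M] (w : ι → M) (C : M) (I : Finset ι) (θ : ι → Bool) : Prop :=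
  ∑ i, w i ≤ C + excludedWeight w I θ

end AddCommMonoid

section OneComplement

variable [DecidableEq ι]

/-- The 1-complement of the map `(I, θ)`: the selection that follows `θ` on `I` and takes every item
outside `I`. -/
def oneComplement (I : Finset ι) (θ : ι → Bool) : ι → Bool :=
  fun i => if i ∈ I then θ i else true

variable (I : Finset ι) (θ : ι → Bool)

variable {I} in
theorem oneComplement_of_mem {i : ι} (hi : i ∈ I) : oneComplement I θ i = θ i :=
  if_pos hi

variable {I} in
theorem oneComplement_of_notMem {i : ι} (hi : i ∉ I) : oneComplement I θ i = true :=
  if_neg hi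

theorem isGreatest_oneComplement :
    IsGreatest {x : ι → Bool | ∀ i ∈ I, x i = θ i} (oneComplement I θ) := by
  refine ⟨fun i hi => oneComplement_of_mem θ hi, fun x hx i => ?_⟩
  by_cases hi : i ∈ I
  · rw [hx i hi, oneComplement_of_mem θ hi]
  · rw [oneComplement_of_notMem θ hi]
    exact Bool.le_true (x i)

end OneComplement

section Weights

variable [Fintype ι] [AddCommMonoid M]

theorem selectedWeight_mono [PartialOrder M] [IsOrderedAddMonoid M] {w : ι → M} (hw : 0 ≤ w) :
    Monotone (selectedWeight w) := by
  refine fun x y hxy => Finset.sum_le_sum fun i _ => ?_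
  have hxy_i : x i → y i := hxy i
  split_ifs with hx hy hy
  · exact le_rfl
  · exact absurd (hxy_i hx) hy
  · exact hw i
  · exact le_rfl

theorem selectedWeight_add_excludedWeight_univ (w : ι → M) (x : ι → Bool) :
    selectedWeight w x + excludedWeight w Finset.univ x = ∑ i, w i := by
  rw [selectedWeight, excludedWeight, ← Finset.sum_add_distrib]
  refine Finset.sum_congr rfl fun i _ => ?_
  split_ifs
  · exact add_zero (w i)
  · exact zero_add (w i)

variable [DecidableEq ι]

theorem excludedWeight_univ_oneComplement (w : ι → M) (I : Finset ι) (θ : ι → Bool) :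
    excludedWeight w Finset.univ (oneComplement I θ) = excludedWeight w I θ := by
  calc
    _ = excludedWeight w I (oneComplement I θ) :=
      (Finset.sum_subset I.subset_univ fun _ _ hi => if_pos (oneComplement_of_notMem θ hi)).symm
    _ = excludedWeight w I θ :=
      Finset.sum_congr rfl fun _ hi => by rw [oneComplement_of_mem θ hi]

theorem selectedWeight_oneComplement_add_excludedWeight
    (w : ι → M) (I : Finset ι) (θ : ι → Bool) :
    selectedWeight w (oneComplement I θ) + excludedWeight w I θ = ∑ i, w i := by
  rw [← excludedWeight_univ_oneComplement, selectedWeight_add_excludedWeight_univ]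

variable [PartialOrder M] [IsOrderedCancelAddMonoid M]

theorem isFeasible_oneComplement_iff_satisfiesC1
    {w : ι → M} {C : M} {I : Finset ι} {θ : ι → Bool} :
    IsFeasible w C I θ (oneComplement I θ) ↔ SatisfiesC1 w C I θ := by
  rw [IsFeasible, and_iff_left fun _ => oneComplement_of_mem θ, SatisfiesC1,
    ← selectedWeight_oneComplement_add_excludedWeight w I θ, add_le_add_iff_right]

end Weights

end SubsetSum

open SubsetSum

theorem subproblem_C1_one_complement_optimal_general
    {ι M : Type*} [Fintype ι] [DecidableEq ι]
    [AddCommMonoid M] [PartialOrder M] [IsOrderedCancelAddMonoid M]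
    {w : ι → M} (hw : 0 ≤ w) {C : M} {I : Finset ι} {θ : ι → Bool}
    (hC1 : SatisfiesC1 w C I θ) :
    IsOptimal w C I θ (oneComplement I θ) :=
  ⟨isFeasible_oneComplement_iff_satisfiesC1.mpr hC1, fun _ hy =>
    selectedWeight_mono hw ((isGreatest_oneComplement I θ).2 hy.2)⟩

/-- If a subproblem of the subset sum problem (given by the map
`(I, θ)`) satisfies the C1-condition `∑_{i ∈ I} (1 − θ(i))·w_i ≥ W − C`, then
the 1-complement of its map (equal to `θ i` on `I`, and to `1` outside `I`) is
an optimal solution of this subproblem: it is feasible, and its objective value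
is at least that of every feasible solution of the subproblem. -/
theorem subproblem_C1_one_complement_optimal
    (n : ℕ) (w : Fin n → ℕ) (hw : ∀ i, 0 < w i) (C : ℕ) (hC : 0 < C)
    (I : Finset (Fin n)) (θ : Fin n → Bool)
    (hC1 : (∑ i, w i) - C ≤ ∑ i ∈ I, if θ i then 0 else w i) :
    ((∑ i, if (if i ∈ I then θ i else true) then w i else 0) ≤ C ∧
      ∀ i ∈ I, (if i ∈ I then θ i else true) = θ i) ∧
    ∀ y : Fin n → Bool,
      ((∑ i, if y i then w i else 0) ≤ C ∧ ∀ i ∈ I, y i = θ i) →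
      (∑ i, if y i then w i else 0) ≤
        ∑ i, if (if i ∈ I then θ i else true) then w i else 0 :=
  subproblem_C1_one_complement_optimal_general (fun i => (hw i).le) (tsub_le_iff_left.mp hC1)
end

section
/- For any integer s with n/2 < s ≤ n, there exists a pair of antichains in 𝒜_s which has the maximum cardinality among all pairs in 𝒜_s and in which every tuple has weight greater than or equal to ⌊n/2⌋. -/
/-- The weight of a binary tuple: the number of its 1-components. -/
def bweight {n : ℕ} (α : Fin n → Bool) : ℕ :=
  (Finset.univ.filter fun i => α i = true).card

/-- The tuple `γ_s ∈ Bⁿ` whose first `n - s` components equal `0` and whose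
last `s` components equal `1`. -/
def gammaTuple (n s : ℕ) : Fin n → Bool := fun i => decide (n - s ≤ (i : ℕ))

/-- `T' < T''`: there are no tuples `a ∈ T'`, `b ∈ T''` with `a ≥ b`. -/
def PairBelow {n : ℕ} (T' T'' : Set (Fin n → Bool)) : Prop :=
  ∀ a ∈ T', ∀ b ∈ T'', ¬ b ≤ a

/-- A pair `(T', T'')` of antichains in `Bⁿ` with `T' < T''`. -/
def AntichainPair {n : ℕ} (T' T'' : Set (Fin n → Bool)) : Prop :=
  IsAntichain (· ≤ ·) T' ∧ IsAntichain (· ≤ ·) T'' ∧ PairBelow T' T''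

/-- Membership of a pair of antichains in `𝒜_s`: a pair of antichains with
`T' < T''` and `γ_s ∈ T'`. -/
def MemA {n : ℕ} (s : ℕ) (T' T'' : Set (Fin n → Bool)) : Prop :=
  AntichainPair T' T'' ∧ gammaTuple n s ∈ T'

/-- Membership of a pair of antichains in `𝒜'_t`: a pair of antichains with
`T' < T''` in which every tuple has weight at most `t`. -/
def MemA' {n : ℕ} (t : ℕ) (T' T'' : Set (Fin n → Bool)) : Prop :=
  AntichainPair T' T'' ∧ ∀ α ∈ T' ∪ T'', bweight α ≤ t

/-!
Weights are raised level by level. Suppose that `k ≤ ⌊n/2⌋`, that `T'` has weights at least `k - 1`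
and that `T''` has weights at least `k`. Let `F` be the level `k - 1` of `T'`, let `G` be the level
`k` of `T''`, and let `Δ` be the upper shadow of `F`. Replacing `F` by its shadow and moving `G` to
the first antichain merges the two copies of each tuple of `D = Δ ∩ G`; in compensation the second
antichain receives the upper shadow `∇D`:
`T' ↦ (T' \ F) ∪ (Δ ∪ G)` and `T'' ↦ (T'' \ G) ∪ ∇D`.
The cardinality grows by `|Δ| - |F| + |∇D| - |D|`. Since `2k ≤ n`, the local LYM inequality gives
`(k + 1)|F| ≤ k|Δ|` and `k|D| ≤ (k + 1)|∇D|`. The second estimate alone allows a loss of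
`|D|/(k + 1)` tuples, but the first one guarantees a gain of `|Δ|/(k + 1)`, and `|D| ≤ |Δ|`.
Tuples of weight at least `⌊n/2⌋` in the first antichain are never moved.
-/

open Finset
open scoped FinsetFamily

/-! ### Upper shadows and the local LYM inequality -/

theorem card_mul_le_card_upShadow_mul {α : Type*} [DecidableEq α] [Fintype α]
    {𝒜 : Finset (Finset α)} {r : ℕ} (h𝒜 : (𝒜 : Set (Finset α)).Sized r) :
    #𝒜 * (Fintype.card α - r) ≤ #(∂⁺ 𝒜) * (r + 1) := by
  have hcompl := card_mul_le_card_shadow_mul h𝒜.compls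
  rw [shadow_compls, card_compls, card_compls] at hcompl
  exact hcompl.trans (Nat.mul_le_mul_left _ (by omega))

/-- The upper shadow `∇F` of a set `F`: the elements covering an element of `F`. On finite sets
ordered by inclusion this is `Finset.upShadow`. -/
def upperShadow {P : Type*} [Preorder P] (F : Set P) : Set P :=
  {b | ∃ a ∈ F, a ⋖ b}

theorem coe_upShadow_toFinset_image {P α : Type*} [Preorder P] [Fintype α] [DecidableEq α]
    (e : P ≃o Finset α) (F : Set P) [Fintype (e '' F)] :
    (∂⁺ (e '' F).toFinset : Set (Finset α)) = e '' upperShadow F := by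
  ext t
  obtain ⟨b, rfl⟩ := e.surjective t
  simp [mem_upShadow_iff, ← covBy_iff_exists_insert, upperShadow]

/-- The identification of a binary tuple with the set of its 1-components, under which cardinality
is definitionally `bweight`. -/
def onesOrderIso (ι : Type*) [Fintype ι] [DecidableEq ι] : (ι → Bool) ≃o Finset ι where
  toFun a := univ.filter fun i => a i = true
  invFun s i := decide (i ∈ s)
  left_inv a := by ext i; simp
  right_inv s := by ext i; simp
  map_rel_iff' := by simp [Finset.subset_iff, Pi.le_def, Bool.le_iff_imp]

section BinaryTuples

variable {n k : ℕ}

theorem bweight_strictMono : StrictMono (bweight : (Fin n → Bool) → ℕ) :=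
  Finset.card_strictMono.comp (onesOrderIso (Fin n)).strictMono

theorem bweight_eq_add_one_of_covBy {a b : Fin n → Bool} (h : a ⋖ b) :
    bweight b = bweight a + 1 :=
  have hcov := (apply_covBy_apply_iff (onesOrderIso (Fin n))).2 h
  (Nat.covBy_iff_add_one_eq.1 hcov.card_finset).symm

theorem bweight_gammaTuple {s : ℕ} (hs : s ≤ n) : bweight (gammaTuple n s) = s := by
  have hcompl := Finset.card_filter_add_card_filter_not (s := (univ : Finset (Fin n)))
    (fun i => n - s ≤ (i : ℕ))
  simp only [not_le, Fin.card_filter_val_lt, card_univ, Fintype.card_fin] at hcompl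
  simp only [bweight, gammaTuple, decide_eq_true_eq]
  omega

/-- The level of `F` is `k - 1`, written without truncated subtraction: `k = 0` forces `F = ∅`. -/
theorem ncard_mul_le_ncard_upperShadow_mul {F : Set (Fin n → Bool)}
    (hF : ∀ a ∈ F, bweight a + 1 = k) :
    F.ncard * (n + 1 - k) ≤ (upperShadow F).ncard * k := by
  classical
  obtain rfl | ⟨a₀, ha₀⟩ := F.eq_empty_or_nonempty
  · simp
  obtain rfl := hF a₀ ha₀
  have hsized :
      ((onesOrderIso (Fin n) '' F).toFinset : Set (Finset (Fin n))).Sized (bweight a₀) := by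
    rw [Set.coe_toFinset]
    rintro _ ⟨a, ha, rfl⟩
    exact Nat.succ_injective (hF a ha)
  have hlym := card_mul_le_card_upShadow_mul hsized
  rwa [← Set.ncard_coe_finset, ← Set.ncard_coe_finset,
    coe_upShadow_toFinset_image, Set.coe_toFinset,
    Set.ncard_image_of_injective _ (onesOrderIso (Fin n)).injective,
    Set.ncard_image_of_injective _ (onesOrderIso (Fin n)).injective, Fintype.card_fin,
    ← Nat.add_sub_add_right n 1] at hlym

/-! ### The relation `T' < T''` -/

variable {A B C : Set (Fin n → Bool)}

theorem PairBelow.mono {A' B' : Set (Fin n → Bool)} (h : PairBelow A B) (hA : A' ⊆ A)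
    (hB : B' ⊆ B) : PairBelow A' B' :=
  fun a ha b hb => h a (hA ha) b (hB hb)

theorem PairBelow.union_left (hA : PairBelow A C) (hB : PairBelow B C) : PairBelow (A ∪ B) C :=
  fun a ha => ha.elim (hA a) (hB a)

theorem PairBelow.union_right (hB : PairBelow A B) (hC : PairBelow A C) : PairBelow A (B ∪ C) :=
  fun a ha b hb => hb.elim (hB a ha b) (hC a ha b)

theorem PairBelow.upperShadow_right (h : PairBelow A B) : PairBelow A (upperShadow B) := by
  rintro a ha b ⟨c, hc, hcb⟩ hba
  exact h a ha c hc (hcb.le.trans hba)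

theorem PairBelow.disjoint (h : PairBelow A B) : Disjoint A B :=
  Set.disjoint_left.2 fun a ha hb => h a ha a hb le_rfl

theorem PairBelow.ncard_union (h : PairBelow A B) : (A ∪ B).ncard = A.ncard + B.ncard :=
  Set.ncard_union_eq h.disjoint

theorem pairBelow_of_bweight_lt (hA : ∀ a ∈ A, bweight a ≤ k) (hB : ∀ b ∈ B, k < bweight b) :
    PairBelow A B :=
  fun a ha b hb hba =>
    (((hA a ha).trans_lt (hB b hb)).trans_le (bweight_strictMono.monotone hba)).false

theorem isAntichain_of_bweight_eq (hA : ∀ a ∈ A, bweight a = k) : IsAntichain (· ≤ ·) A := by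
  intro a ha b hb hne hab
  exact (bweight_strictMono (hab.lt_of_ne hne)).ne ((hA a ha).trans (hA b hb).symm)

theorem PairBelow.isAntichain_union (h : PairBelow A B) (hA : IsAntichain (· ≤ ·) A)
    (hAk : ∀ a ∈ A, k ≤ bweight a) (hBk : ∀ b ∈ B, bweight b = k) :
    IsAntichain (· ≤ ·) (A ∪ B) := by
  refine _root_.isAntichain_union.2 ⟨hA, isAntichain_of_bweight_eq hBk, ?_⟩
  refine fun a ha b hb hne => ⟨fun hab => ?_, h a ha b hb⟩
  have hlt := bweight_strictMono (lt_of_le_of_ne hab hne)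
  exact (hAk a ha).not_gt (hBk b hb ▸ hlt)

/-! ### Raising a pair of antichains -/

/-- The tuples of `T` of weight less than `k`. -/
def lightPart (k : ℕ) (T : Set (Fin n → Bool)) : Set (Fin n → Bool) :=
  {a ∈ T | bweight a < k}

/-- The tuples of `T` of weight at least `k`. -/
def heavyPart (k : ℕ) (T : Set (Fin n → Bool)) : Set (Fin n → Bool) :=
  {a ∈ T | k ≤ bweight a}

theorem lightPart_subset (k : ℕ) (T : Set (Fin n → Bool)) : lightPart k T ⊆ T :=
  Set.sep_subset _ _

theorem heavyPart_subset (k : ℕ) (T : Set (Fin n → Bool)) : heavyPart k T ⊆ T :=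
  Set.sep_subset _ _

theorem ncard_heavyPart_add_ncard_lightPart (k : ℕ) (T : Set (Fin n → Bool)) :
    (heavyPart k T).ncard + (lightPart k T).ncard = T.ncard := by
  have hsdiff : heavyPart k T = T \ lightPart k T := by
    ext a
    simp +contextual [heavyPart, lightPart]
  rw [hsdiff, Set.ncard_sdiff_add_ncard_of_subset (lightPart_subset k T)]

theorem pairBelow_heavyPart_lightPart (k : ℕ) {T : Set (Fin n → Bool)}
    (hT : IsAntichain (· ≤ ·) T) : PairBelow (heavyPart k T) (lightPart k T) := by
  rintro a ⟨ha, hka⟩ b ⟨hb, hbk⟩ hba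
  obtain rfl := hT.eq hb ha hba
  exact hbk.not_ge hka

/-- The set `D` of tuples that arise twice when the tuples of weight less than `k` in `S` are
replaced by their upper shadow and those of weight at most `k` in `T` are moved to `S`. -/
def collisions (k : ℕ) (S T : Set (Fin n → Bool)) : Set (Fin n → Bool) :=
  upperShadow (lightPart k S) ∩ lightPart (k + 1) T

/-- The first antichain after one raising step applied to the pair `(S, T)`. It is meant for `S` of
weights at least `k - 1` and `T` of weights at least `k`,
where the light parts are single levels. -/
def raiseFst (k : ℕ) (S T : Set (Fin n → Bool)) : Set (Fin n → Bool) :=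
  heavyPart k S ∪ (upperShadow (lightPart k S) ∪ lightPart (k + 1) T)

/-- The second antichain after one raising step applied to the pair `(S, T)`: the light tuples of
`T` have moved to the first antichain, and the upper shadow of the collisions compensates. -/
def raiseSnd (k : ℕ) (S T : Set (Fin n → Bool)) : Set (Fin n → Bool) :=
  heavyPart (k + 1) T ∪ upperShadow (collisions k S T)

theorem bweight_add_one_eq_of_mem_lightPart {T : Set (Fin n → Bool)}
    (hT : ∀ a ∈ T, k ≤ bweight a + 1) : ∀ a ∈ lightPart k T, bweight a + 1 = k :=
  fun a ha => (Nat.succ_le_of_lt ha.2).antisymm (hT a ha.1)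

theorem bweight_eq_of_mem_upperShadow {F : Set (Fin n → Bool)}
    (hF : ∀ a ∈ F, bweight a + 1 = k) : ∀ b ∈ upperShadow F, bweight b = k := by
  rintro b ⟨a, ha, hab⟩
  rw [bweight_eq_add_one_of_covBy hab, hF a ha]

variable {T' T'' : Set (Fin n → Bool)}

theorem bweight_add_one_eq_of_mem_collisions (hT'' : ∀ a ∈ T'', k ≤ bweight a) :
    ∀ a ∈ collisions k T' T'', bweight a + 1 = k + 1 :=
  fun a ha => bweight_add_one_eq_of_mem_lightPart
    (fun b hb => Nat.succ_le_succ (hT'' b hb)) a ha.2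

theorem lt_bweight_of_mem_raiseSnd (hT'' : ∀ a ∈ T'', k ≤ bweight a) :
    ∀ a ∈ raiseSnd k T' T'', k < bweight a := by
  rintro a (ha | ha)
  · exact ha.2
  · exact (bweight_eq_of_mem_upperShadow (bweight_add_one_eq_of_mem_collisions hT'') a ha).ge

theorem bweight_eq_of_mem_upperShadow_union_lightPart
    (hT' : ∀ a ∈ T', k ≤ bweight a + 1) (hT'' : ∀ a ∈ T'', k ≤ bweight a) :
    ∀ a ∈ upperShadow (lightPart k T') ∪ lightPart (k + 1) T'', bweight a = k := by
  rintro a (ha | ha)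
  · exact bweight_eq_of_mem_upperShadow (bweight_add_one_eq_of_mem_lightPart hT') a ha
  · exact (Nat.le_of_lt_succ ha.2).antisymm (hT'' a ha.1)

theorem le_bweight_of_mem_raiseFst
    (hT' : ∀ a ∈ T', k ≤ bweight a + 1) (hT'' : ∀ a ∈ T'', k ≤ bweight a) :
    ∀ a ∈ raiseFst k T' T'', k ≤ bweight a := by
  rintro a (ha | ha)
  · exact ha.2
  · exact (bweight_eq_of_mem_upperShadow_union_lightPart hT' hT'' a ha).ge

namespace AntichainPair

theorem pairBelow_heavyPart_union (h : AntichainPair T' T'') (k : ℕ) :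
    PairBelow (heavyPart k T') (upperShadow (lightPart k T') ∪ lightPart (k + 1) T'') :=
  (pairBelow_heavyPart_lightPart k h.1).upperShadow_right.union_right
    (h.2.2.mono (heavyPart_subset k T') (lightPart_subset (k + 1) T''))

theorem pairBelow_heavyPart_upperShadow_collisions (h : AntichainPair T' T'') (k : ℕ) :
    PairBelow (heavyPart (k + 1) T'') (upperShadow (collisions k T' T'')) :=
  ((pairBelow_heavyPart_lightPart (k + 1) h.2.1).mono subset_rfl
    Set.inter_subset_right).upperShadow_right

theorem raise (h : AntichainPair T' T'') (hT' : ∀ a ∈ T', k ≤ bweight a + 1)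
    (hT'' : ∀ a ∈ T'', k ≤ bweight a) :
    AntichainPair (raiseFst k T' T'') (raiseSnd k T' T'') := by
  have hlevel := bweight_eq_of_mem_upperShadow_union_lightPart hT' hT''
  refine ⟨?_, ?_, PairBelow.union_left ?_ ?_⟩
  · exact (h.pairBelow_heavyPart_union k).isAntichain_union
      (h.1.subset (heavyPart_subset k T')) (fun _ ha => ha.2) hlevel
  · exact (h.pairBelow_heavyPart_upperShadow_collisions k).isAntichain_union
      (h.2.1.subset (heavyPart_subset (k + 1) T'')) (fun _ ha => ha.2)
      (bweight_eq_of_mem_upperShadow (bweight_add_one_eq_of_mem_collisions hT''))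
  · have hbelow : PairBelow (heavyPart k T') T'' := h.2.2.mono (heavyPart_subset k T') subset_rfl
    exact (hbelow.mono subset_rfl (heavyPart_subset (k + 1) T'')).union_right
      (hbelow.mono subset_rfl
        (Set.inter_subset_right.trans (lightPart_subset (k + 1) T''))).upperShadow_right
  · exact pairBelow_of_bweight_lt (fun a ha => (hlevel a ha).le) (lt_bweight_of_mem_raiseSnd hT'')

theorem ncard_raise (h : AntichainPair T' T'') (k : ℕ) :
    (raiseFst k T' T'').ncard + (raiseSnd k T' T'').ncard +
        ((lightPart k T').ncard + (collisions k T' T'').ncard) =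
      T'.ncard + T''.ncard +
        ((upperShadow (lightPart k T')).ncard + (upperShadow (collisions k T' T'')).ncard) := by
  have hfst : (raiseFst k T' T'').ncard = _ := (h.pairBelow_heavyPart_union k).ncard_union
  have hsnd : (raiseSnd k T' T'').ncard = _ :=
    (h.pairBelow_heavyPart_upperShadow_collisions k).ncard_union
  have hunion : _ + (collisions k T' T'').ncard = _ :=
    Set.ncard_union_add_ncard_inter (upperShadow (lightPart k T')) (lightPart (k + 1) T'')
  have hT' := ncard_heavyPart_add_ncard_lightPart k T'
  have hT'' := ncard_heavyPart_add_ncard_lightPart (k + 1) T''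
  omega

end AntichainPair

theorem ncard_lightPart_add_ncard_collisions_le (hk : k ≤ n / 2)
    (hT' : ∀ a ∈ T', k ≤ bweight a + 1) (hT'' : ∀ a ∈ T'', k ≤ bweight a) :
    (lightPart k T').ncard + (collisions k T' T'').ncard ≤
      (upperShadow (lightPart k T')).ncard + (upperShadow (collisions k T' T'')).ncard := by
  set f := (lightPart k T').ncard
  set d := (collisions k T' T'').ncard
  set δ := (upperShadow (lightPart k T')).ncard
  set e := (upperShadow (collisions k T' T'')).ncard
  have hf : f * (k + 1) ≤ δ * k :=
    (Nat.mul_le_mul_left f (by omega)).trans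
      (ncard_mul_le_ncard_upperShadow_mul (bweight_add_one_eq_of_mem_lightPart hT'))
  have hd : d * k ≤ e * (k + 1) :=
    (Nat.mul_le_mul_left d (by omega)).trans
      (ncard_mul_le_ncard_upperShadow_mul (bweight_add_one_eq_of_mem_collisions hT''))
  have hdδ : d ≤ δ := Set.ncard_le_ncard Set.inter_subset_left
  refine Nat.le_of_mul_le_mul_right (c := k + 1) ?_ k.succ_pos
  calc (f + d) * (k + 1) = f * (k + 1) + d * k + d := by ring
    _ ≤ δ * k + e * (k + 1) + δ := by gcongr
    _ = (δ + e) * (k + 1) := by ring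

theorem AntichainPair.ncard_add_ncard_le_raise (h : AntichainPair T' T'') (hk : k ≤ n / 2)
    (hT' : ∀ a ∈ T', k ≤ bweight a + 1) (hT'' : ∀ a ∈ T'', k ≤ bweight a) :
    T'.ncard + T''.ncard ≤ (raiseFst k T' T'').ncard + (raiseSnd k T' T'').ncard := by
  have hcard := h.ncard_raise k
  have hgain := ncard_lightPart_add_ncard_collisions_le hk hT' hT''
  omega

theorem AntichainPair.exists_ncard_le_and_le_bweight (h : AntichainPair T' T'')
    (hk : k ≤ n / 2 + 1) :
    ∃ U' U'' : Set (Fin n → Bool), AntichainPair U' U'' ∧ heavyPart (n / 2) T' ⊆ U' ∧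
      T'.ncard + T''.ncard ≤ U'.ncard + U''.ncard ∧
      (∀ a ∈ U', k ≤ bweight a + 1) ∧ ∀ a ∈ U'', k ≤ bweight a := by
  induction k with
  | zero => exact ⟨T', T'', h, heavyPart_subset _ _, le_rfl, by simp, by simp⟩
  | succ k ih =>
    obtain ⟨U', U'', hU, hheavy, hcard, hU', hU''⟩ := ih (by omega)
    have hk' : k ≤ n / 2 := by omega
    exact ⟨raiseFst k U' U'', raiseSnd k U' U'', hU.raise hU' hU'',
      fun a ha => Or.inl ⟨hheavy ha, hk'.trans ha.2⟩,
      hcard.trans (hU.ncard_add_ncard_le_raise hk' hU' hU''),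
      fun a ha => Nat.succ_le_succ (le_bweight_of_mem_raiseFst hU' hU'' a ha),
      lt_bweight_of_mem_raiseSnd hU''⟩

theorem exists_max_antichainPair {Γ : Set (Fin n → Bool)} (hΓ : IsAntichain (· ≤ ·) Γ) :
    ∃ T' T'' : Set (Fin n → Bool), AntichainPair T' T'' ∧ Γ ⊆ T' ∧
      ∀ U' U'' : Set (Fin n → Bool), AntichainPair U' U'' → Γ ⊆ U' →
        U'.ncard + U''.ncard ≤ T'.ncard + T''.ncard := by
  obtain ⟨⟨T', T''⟩, ⟨hT, hΓT⟩, hmax⟩ := Set.exists_max_image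
    {p : Set (Fin n → Bool) × Set (Fin n → Bool) | AntichainPair p.1 p.2 ∧ Γ ⊆ p.1}
    (fun p => p.1.ncard + p.2.ncard) (Set.toFinite _)
    ⟨(Γ, ∅), ⟨hΓ, IsAntichain.empty, by simp [PairBelow]⟩, subset_rfl⟩
  exact ⟨T', T'', hT, hΓT, fun U' U'' hU hΓU => hmax (U', U'') ⟨hU, hΓU⟩⟩

theorem exists_max_pair_with_weights_ge_general {Γ : Set (Fin n → Bool)}
    (hΓ : IsAntichain (· ≤ ·) Γ) (hΓw : ∀ γ ∈ Γ, n / 2 ≤ bweight γ) :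
    ∃ T' T'' : Set (Fin n → Bool), (AntichainPair T' T'' ∧ Γ ⊆ T') ∧
      (∀ U' U'' : Set (Fin n → Bool), AntichainPair U' U'' ∧ Γ ⊆ U' →
        U'.ncard + U''.ncard ≤ T'.ncard + T''.ncard) ∧
      (∀ α ∈ T', n / 2 ≤ bweight α) ∧ ∀ α ∈ T'', n / 2 < bweight α := by
  obtain ⟨M', M'', hM, hΓM, hmax⟩ := exists_max_antichainPair hΓ
  obtain ⟨T', T'', hT, hheavy, hcard, hT', hT''⟩ :=
    hM.exists_ncard_le_and_le_bweight le_rfl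
  exact ⟨T', T'', ⟨hT, fun γ hγ => hheavy ⟨hΓM hγ, hΓw γ hγ⟩⟩,
    fun U' U'' hU => (hmax U' U'' hU.1 hU.2).trans hcard,
    fun a ha => Nat.le_of_succ_le_succ (hT' a ha), hT''⟩

end BinaryTuples

/-- For any integer `s` with `n/2 < s ≤ n`, there exists a
pair of antichains in `𝒜_s` which has the maximum cardinality among all pairs
in `𝒜_s` and in which every tuple has weight at least `⌊n/2⌋`. -/
theorem exists_max_pair_with_weights_ge {n s : ℕ} (hs1 : n < 2 * s) (hs2 : s ≤ n) :
    ∃ T' T'' : Set (Fin n → Bool), MemA s T' T'' ∧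
      (∀ U' U'' : Set (Fin n → Bool), MemA s U' U'' →
        U'.ncard + U''.ncard ≤ T'.ncard + T''.ncard) ∧
      ∀ α ∈ T' ∪ T'', n / 2 ≤ bweight α := by
  have hw : n / 2 ≤ bweight (gammaTuple n s) := by rw [bweight_gammaTuple hs2]; omega
  obtain ⟨T', T'', hT, hmax, hT', hT''⟩ :=
    exists_max_pair_with_weights_ge_general (Γ := {gammaTuple n s}) .singleton (by simpa using hw)
  simp only [Set.singleton_subset_iff] at hT hmax
  exact ⟨T', T'', hT, hmax, fun α hα => hα.elim (hT' α) fun h => (hT'' α h).le⟩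
end

section
/- For any integer t with 1 ≤ t ≤ ⌊n/2⌋ + 1, the cardinality of any pair of antichains (T', T'') ∈ 𝒜'_t satisfies |T'| + |T''| ≤ C(n+1, t), where C(a,b) denotes the binomial coefficient. -/
/-!
Identify tuples with their supports. A pair `P < Q` of antichains of sets becomes a single antichain
over one more point by adjoining the new point to the members of `P` only. This makes the members
of `P` of the maximal size `t` too large, so these are first moved to `Q`: by maximality, and since
no member of `Q` lies below a member of `P`, the result is again a pair of antichains. The single
antichain consists of sets of size at most `t` over `n + 1` points, and `C(n+1, t)` is the largest
of the `C(n+1, k)` with `k ≤ t`, so the LYM inequality bounds its cardinality by `C(n+1, t)`.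
-/

open Finset

lemma choose_le_choose_of_le_succ_half {m k t : ℕ} (hkt : k ≤ t) (ht : t ≤ (m + 1) / 2) :
    m.choose k ≤ m.choose t := by
  obtain ht_le | hm : t ≤ m / 2 ∨ m = t + m / 2 := by omega
  · induction t, hkt using Nat.le_induction with
    | base => exact le_rfl
    | succ j _ ih =>
      exact (ih (by omega) (by omega)).trans (Nat.choose_le_succ_of_lt_half_left (by omega))
  · calc
      m.choose k ≤ m.choose (m / 2) := Nat.choose_le_middle k m
      _ = m.choose t := (Nat.choose_symm_of_eq_add hm).symm

section Families

variable {α : Type*} {t : ℕ}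

lemma card_le_choose_of_isAntichain [Fintype α] {𝒜 : Finset (Finset α)}
    (h𝒜 : IsAntichain (· ⊆ ·) (𝒜 : Set (Finset α))) (ht : t ≤ (Fintype.card α + 1) / 2)
    (hcard : ∀ s ∈ 𝒜, #s ≤ t) : #𝒜 ≤ (Fintype.card α).choose t := by
  have choose_pos : 0 < ((Fintype.card α).choose t : ℚ) :=
    mod_cast Nat.choose_pos (by omega)
  have lym : #𝒜 * ((Fintype.card α).choose t : ℚ)⁻¹ ≤ 1 := calc
    #𝒜 * ((Fintype.card α).choose t : ℚ)⁻¹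
      = ∑ _s ∈ 𝒜, ((Fintype.card α).choose t : ℚ)⁻¹ := by rw [sum_const, nsmul_eq_mul]
    _ ≤ ∑ s ∈ 𝒜, ((Fintype.card α).choose #s : ℚ)⁻¹ := by
      gcongr with s hs
      · exact mod_cast Nat.choose_pos s.card_le_univ
      · exact choose_le_choose_of_le_succ_half (hcard s hs) ht
    _ ≤ 1 := lubell_yamamoto_meshalkin_inequality_sum_inv_choose h𝒜
  rw [mul_inv_le_iff₀ choose_pos, one_mul] at lym
  exact mod_cast lym

lemma not_insertNone_subset_map_some (a b : Finset α) : ¬ insertNone a ⊆ b.map .some :=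
  fun h => by simpa using h (none_mem_insertNone (s := a))

lemma map_some_subset_insertNone {a b : Finset α} : a.map .some ⊆ insertNone b ↔ a ⊆ b := by
  simp [subset_iff]

lemma disjoint_map_insertNone_map_some (P Q : Finset (Finset α)) :
    Disjoint (P.map insertNone.toEmbedding) (Q.map (mapEmbedding .some).toEmbedding) := by
  simp only [disjoint_left, mem_map]
  rintro _ ⟨a, -, rfl⟩ ⟨b, -, hba⟩
  exact not_insertNone_subset_map_some a b hba.ge

/-- The family over one more point, the element `none` of `Option α`, that glues two families
together: the new point is adjoined to every member of `P` and to no member of `Q`. It turns a pair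
of antichains `P < Q` into a single antichain. -/
def optionGlue (P Q : Finset (Finset α)) : Finset (Finset (Option α)) :=
  (P.map insertNone.toEmbedding).disjUnion (Q.map (mapEmbedding .some).toEmbedding)
    (disjoint_map_insertNone_map_some P Q)

variable {P Q : Finset (Finset α)}

lemma card_optionGlue : #(optionGlue P Q) = #P + #Q := by
  simp only [optionGlue, card_disjUnion, card_map]

lemma mem_optionGlue {s : Finset (Option α)} :
    s ∈ optionGlue P Q ↔ (∃ a ∈ P, insertNone a = s) ∨ ∃ b ∈ Q, b.map .some = s := by
  simp only [optionGlue, mem_disjUnion, mem_map]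
  rfl

lemma isAntichain_optionGlue (hP : IsAntichain (· ⊆ ·) (P : Set (Finset α)))
    (hQ : IsAntichain (· ⊆ ·) (Q : Set (Finset α))) (hPQ : ∀ a ∈ P, ∀ b ∈ Q, ¬ b ⊆ a) :
    IsAntichain (· ⊆ ·) (optionGlue P Q : Set (Finset (Option α))) := by
  rw [optionGlue, coe_disjUnion, coe_map, coe_map, isAntichain_union]
  refine ⟨hP.image_embedding insertNone, hQ.image_embedding (mapEmbedding .some), ?_⟩
  rintro _ ⟨a, ha, rfl⟩ _ ⟨b, hb, rfl⟩ -
  exact ⟨not_insertNone_subset_map_some a b,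
    fun h => hPQ a ha b hb (map_some_subset_insertNone.1 h)⟩

lemma card_le_of_mem_optionGlue (hPt : ∀ a ∈ P, #a < t) (hQt : ∀ b ∈ Q, #b ≤ t)
    {s : Finset (Option α)} (hs : s ∈ optionGlue P Q) : #s ≤ t := by
  obtain ⟨a, ha, rfl⟩ | ⟨b, hb, rfl⟩ := mem_optionGlue.1 hs
  · exact (card_insertNone a).trans_le (hPt a ha)
  · exact (card_map _).trans_le (hQt b hb)

lemma card_add_card_le_choose_of_card_lt [Fintype α]
    (hP : IsAntichain (· ⊆ ·) (P : Set (Finset α)))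
    (hQ : IsAntichain (· ⊆ ·) (Q : Set (Finset α))) (hPQ : ∀ a ∈ P, ∀ b ∈ Q, ¬ b ⊆ a)
    (ht : t ≤ Fintype.card α / 2 + 1) (hPt : ∀ a ∈ P, #a < t) (hQt : ∀ b ∈ Q, #b ≤ t) :
    #P + #Q ≤ (Fintype.card α + 1).choose t := by
  rw [← card_optionGlue, ← Fintype.card_option]
  exact card_le_choose_of_isAntichain (isAntichain_optionGlue hP hQ hPQ)
    (by rw [Fintype.card_option]; omega) fun _ => card_le_of_mem_optionGlue hPt hQt

section TopLayer

variable [DecidableEq α]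

lemma card_sdiff_slice_add_card_slice_union (hPQ : ∀ a ∈ P, ∀ b ∈ Q, ¬ b ⊆ a) :
    #(P \ P # t) + #(P # t ∪ Q) = #P + #Q := by
  have disjoint_slice : Disjoint (P # t) Q :=
    disjoint_left.2 fun a haP haQ => hPQ a (slice_subset haP) a haQ Subset.rfl
  rw [card_union_of_disjoint disjoint_slice, ← add_assoc,
    card_sdiff_add_card_eq_card slice_subset]

lemma isAntichain_slice_union (hQ : IsAntichain (· ⊆ ·) (Q : Set (Finset α)))
    (hPQ : ∀ a ∈ P, ∀ b ∈ Q, ¬ b ⊆ a) (hQt : ∀ b ∈ Q, #b ≤ t) :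
    IsAntichain (· ⊆ ·) (↑(P # t ∪ Q) : Set (Finset α)) := by
  rw [coe_union, isAntichain_union]
  refine ⟨sized_slice.isAntichain, hQ, fun a ha b hb hab => ⟨fun h => hab ?_, ?_⟩⟩
  · exact eq_of_subset_of_card_le h ((hQt b hb).trans_eq (sized_slice ha).symm)
  · exact hPQ a (slice_subset ha) b hb

lemma not_subset_of_mem_slice_union (hP : IsAntichain (· ⊆ ·) (P : Set (Finset α)))
    (hPQ : ∀ a ∈ P, ∀ b ∈ Q, ¬ b ⊆ a) {a b : Finset α} (ha : a ∈ P \ P # t)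
    (hb : b ∈ P # t ∪ Q) : ¬ b ⊆ a := by
  obtain ⟨haP, ha_slice⟩ := mem_sdiff.1 ha
  obtain hb_slice | hbQ := mem_union.1 hb
  · exact fun h => ha_slice (hP.eq (slice_subset hb_slice) haP h ▸ hb_slice)
  · exact hPQ a haP b hbQ

lemma card_lt_of_mem_sdiff_slice (hPt : ∀ a ∈ P, #a ≤ t) {a : Finset α} (ha : a ∈ P \ P # t) :
    #a < t := by
  obtain ⟨haP, ha_slice⟩ := mem_sdiff.1 ha
  exact (hPt a haP).lt_of_ne fun h => ha_slice (mem_slice.2 ⟨haP, h⟩)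

end TopLayer

theorem card_add_card_le_choose [Fintype α] (hP : IsAntichain (· ⊆ ·) (P : Set (Finset α)))
    (hQ : IsAntichain (· ⊆ ·) (Q : Set (Finset α))) (hPQ : ∀ a ∈ P, ∀ b ∈ Q, ¬ b ⊆ a)
    (ht : t ≤ Fintype.card α / 2 + 1) (hPt : ∀ a ∈ P, #a ≤ t) (hQt : ∀ b ∈ Q, #b ≤ t) :
    #P + #Q ≤ (Fintype.card α + 1).choose t := by
  classical
  have card_slice_union_le : ∀ b ∈ P # t ∪ Q, #b ≤ t := fun b hb =>
    (mem_union.1 hb).elim (fun h => (sized_slice h).le) (hQt b)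
  calc
    #P + #Q = #(P \ P # t) + #(P # t ∪ Q) := (card_sdiff_slice_add_card_slice_union hPQ).symm
    _ ≤ (Fintype.card α + 1).choose t :=
      card_add_card_le_choose_of_card_lt (hP.subset (coe_subset.2 sdiff_subset))
        (isAntichain_slice_union hQ hPQ hQt)
        (fun _ ha _ hb => not_subset_of_mem_slice_union hP hPQ ha hb) ht
        (fun _ => card_lt_of_mem_sdiff_slice hPt) card_slice_union_le

end Families

section Tuples

variable {ι : Type*} [Fintype ι]

/-- The support of a binary tuple, as an order embedding into the finsets of indices. -/
def tupleSupport : (ι → Bool) ↪o Finset ι :=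
  OrderEmbedding.ofMapLEIff (fun x => univ.filter fun i => x i = true) fun x y => by
    simp [subset_iff, Pi.le_def, Bool.le_iff_imp]

/-- The family of supports of a set of binary tuples, as a `Finset` so that results on finite set
families apply to it. -/
noncomputable def supports (T : Set (ι → Bool)) : Finset (Finset ι) :=
  T.toFinite.toFinset.map tupleSupport.toEmbedding

variable {T : Set (ι → Bool)}

lemma coe_supports : (supports T : Set (Finset ι)) = tupleSupport '' T := by
  simp [supports]

lemma card_supports : #(supports T) = T.ncard := by
  rw [supports, card_map, Set.ncard_eq_toFinset_card T]

lemma forall_mem_supports {p : Finset ι → Prop} :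
    (∀ s ∈ supports T, p s) ↔ ∀ x ∈ T, p (tupleSupport x) := by
  simp [supports]

lemma isAntichain_supports (hT : IsAntichain (· ≤ ·) T) :
    IsAntichain (· ⊆ ·) (supports T : Set (Finset ι)) := by
  rw [coe_supports]
  exact hT.image_embedding tupleSupport

end Tuples

lemma not_subset_of_pairBelow {n : ℕ} {T' T'' : Set (Fin n → Bool)} (h : PairBelow T' T'') :
    ∀ a ∈ supports T', ∀ b ∈ supports T'', ¬ b ⊆ a := by
  simp only [forall_mem_supports]
  exact fun a ha b hb hba => h a ha b hb (tupleSupport.le_iff_le.1 hba)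

lemma card_le_of_mem_supports {n t : ℕ} {T : Set (Fin n → Bool)} (h : ∀ x ∈ T, bweight x ≤ t) :
    ∀ s ∈ supports T, #s ≤ t :=
  forall_mem_supports.2 h

/-- For any integer `t` with `1 ≤ t ≤ ⌊n/2⌋ + 1`, the
cardinality of any pair of antichains `(T', T'') ∈ 𝒜'_t` satisfies
`|T'| + |T''| ≤ C(n+1, t)`. -/
theorem card_pair_le_of_memA' {n t : ℕ} (ht1 : 1 ≤ t) (ht2 : t ≤ n / 2 + 1)
    (T' T'' : Set (Fin n → Bool)) (h : MemA' t T' T'') :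
    T'.ncard + T''.ncard ≤ Nat.choose (n + 1) t := by
  obtain ⟨⟨hT', hT'', hlt⟩, hw⟩ := h
  have card_le := card_add_card_le_choose (isAntichain_supports hT') (isAntichain_supports hT'')
    (not_subset_of_pairBelow hlt) (by rwa [Fintype.card_fin])
    (card_le_of_mem_supports fun x hx => hw x (Or.inl hx))
    (card_le_of_mem_supports fun x hx => hw x (Or.inr hx))
  rwa [card_supports, card_supports, Fintype.card_fin] at card_le
end
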